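/- The Steiner triple system of order 31 on Z_31 obtained by developing the base blocks {0,5,11}, {0,4,12}, {0,3,13}, {0,2,9}, {0,1,15} modulo 31 is nonsequenceable; moreover, for every point x ∈ Z_31 there exists an almost parallel class of this system that does not contain x. -/

import Mathlib

/-- `B` is (the block set of) a partial Steiner triple system on the point set `X`:
every block has 3 points and every pair of distinct points lies in at most one block. -/
def isPSTS {X : Type*} [DecidableEq X] (B : Finset (Finset X)) : Prop :=
  (∀ b ∈ B, b.card = 3) ∧
  ∀ p q : X, p ≠ q → (B.filter (fun b => p ∈ b ∧ q ∈ b)).card ≤ 1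

/-- `B` is (the block set of) a Steiner triple system on the point set `X`:
every block has 3 points and every pair of distinct points lies in exactly one block. -/
def isSTS {X : Type*} [DecidableEq X] (B : Finset (Finset X)) : Prop :=
  (∀ b ∈ B, b.card = 3) ∧
  ∀ p q : X, p ≠ q → (B.filter (fun b => p ∈ b ∧ q ∈ b)).card = 1

/-- The finset `S` can be partitioned into blocks of `B`. -/
def blocksPartition {X : Type*} [DecidableEq X] (B : Finset (Finset X)) (S : Finset X) : Prop :=
  ∃ P : Finset (Finset X), P ⊆ B ∧
    (∀ b₁ ∈ P, ∀ b₂ ∈ P, b₁ ≠ b₂ → Disjoint b₁ b₂) ∧ P.biUnion id = S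

/-- `A` is an almost parallel class of `B`: a set of pairwise disjoint blocks
covering all points of `X` except exactly one. -/
def isAPC {X : Type*} [DecidableEq X] [Fintype X] (B A : Finset (Finset X)) : Prop :=
  A ⊆ B ∧ (∀ b₁ ∈ A, ∀ b₂ ∈ A, b₁ ≠ b₂ → Disjoint b₁ b₂) ∧
    ∃ y : X, A.biUnion id = Finset.univ.erase y

/-- `B` is sequenceable: there is a sequencing of the points (a bijection from
`Fin n` to `X`) such that no proper segment can be partitioned into blocks of `B`. -/
def sequenceable {X : Type*} [DecidableEq X] [Fintype X] (B : Finset (Finset X)) : Prop :=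
  ∃ f : Fin (Fintype.card X) ≃ X,
    ∀ i j : Fin (Fintype.card X), i ≤ j →
      ¬((i : ℕ) = 0 ∧ (j : ℕ) = Fintype.card X - 1) →
      ¬ blocksPartition B ((Finset.Icc i j).image f)

/-- The blocks obtained by developing the base blocks modulo 31. -/
def dev31 : Finset (Finset (ZMod 31)) :=
  Finset.univ.biUnion fun t : ZMod 31 =>
    ({{0,5,11}, {0,4,12}, {0,3,13}, {0,2,9}, {0,1,15}} : Finset (Finset (ZMod 31))).image (fun b => b.image (· + t))

def apc0 : Finset (Finset (ZMod 31)) :=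
  {{1,6,12}, {2,7,13}, {3,23,28}, {4,10,30}, {5,21,22}, {8,24,25}, {9,11,18}, {14,17,27}, {15,20,26}, {16,19,29}}

theorem apc0_sub : apc0 ⊆ dev31 := by decide +kernel

theorem apc0_disj : ∀ b₁ ∈ apc0, ∀ b₂ ∈ apc0, b₁ ≠ b₂ → Disjoint b₁ b₂ := by
  have h : ∀ b₁ ∈ apc0, ∀ b₂ ∈ apc0, b₁ = b₂ ∨ b₁ ∩ b₂ = ∅ := by
    unfold apc0
    simp only [Finset.forall_mem_insert, Finset.mem_singleton, forall_eq]
    and_intros <;> first | exact Or.inl trivial | exact Or.inr (by decide +kernel)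
  intro b₁ h₁ b₂ h₂ hne
  exact Finset.disjoint_iff_inter_eq_empty.2 ((h b₁ h₁ b₂ h₂).resolve_left hne)

theorem apc0_union : apc0.biUnion id = Finset.univ.erase 0 := by decide +kernel

theorem dev31_trans (x : ZMod 31) (b : Finset (ZMod 31)) (hb : b ∈ dev31) :
    b.image (· + x) ∈ dev31 := by
  unfold dev31 at hb ⊢
  rw [Finset.mem_biUnion] at hb ⊢
  obtain ⟨t, -, ht⟩ := hb
  rw [Finset.mem_image] at ht
  obtain ⟨c, hc, rfl⟩ := ht
  refine ⟨t + x, Finset.mem_univ _, Finset.mem_image.2 ⟨c, hc, ?_⟩⟩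
  rw [Finset.image_image]
  congr 1
  funext y
  simp [add_assoc]

theorem apc_exists (x : ZMod 31) : ∃ A : Finset (Finset (ZMod 31)), A ⊆ dev31 ∧
    (∀ b₁ ∈ A, ∀ b₂ ∈ A, b₁ ≠ b₂ → Disjoint b₁ b₂) ∧
    A.biUnion id = Finset.univ.erase x := by
  refine ⟨apc0.image (fun b => b.image (· + x)), ?_, ?_, ?_⟩
  · intro b hb
    obtain ⟨c, hc, rfl⟩ := Finset.mem_image.1 hb
    exact dev31_trans x c (apc0_sub hc)
  · intro b₁ h₁ b₂ h₂ hne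
    obtain ⟨c₁, hc₁, rfl⟩ := Finset.mem_image.1 h₁
    obtain ⟨c₂, hc₂, rfl⟩ := Finset.mem_image.1 h₂
    rw [Finset.disjoint_image (add_left_injective x)]
    exact apc0_disj _ hc₁ _ hc₂ (fun h => hne (by rw [h]))
  · have h : (apc0.image (fun b => b.image (· + x))).biUnion id
        = (apc0.biUnion id).image (· + x) := by
      rw [Finset.image_biUnion, Finset.biUnion_image]
      rfl
    rw [h, apc0_union, Finset.image_erase (add_left_injective x),
      Finset.image_univ_of_surjective (add_right_surjective x), zero_add]

theorem stmt10 :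
    ¬ sequenceable dev31 ∧
    (∀ x : ZMod 31, ∃ A : Finset (Finset (ZMod 31)),
      isAPC dev31 A ∧ x ∉ A.biUnion id) := by
  constructor
  · rintro ⟨f, hf⟩
    have hc : Fintype.card (ZMod 31) = 31 := ZMod.card 31
    let i0 : Fin (Fintype.card (ZMod 31)) := ⟨0, by omega⟩
    let i1 : Fin (Fintype.card (ZMod 31)) := ⟨1, by omega⟩
    let i2 : Fin (Fintype.card (ZMod 31)) := ⟨30, by omega⟩
    obtain ⟨A, h1, h2, h3⟩ := apc_exists (f i0)
    refine hf i1 i2 (Fin.mk_le_mk.2 (by omega)) (fun h => absurd h.1 (by simp [i1])) ⟨A, h1, h2, ?_⟩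
    rw [h3]
    have hI : Finset.Icc i1 i2 = Finset.univ.erase i0 := by
      ext k
      have := k.2
      simp only [Finset.mem_Icc, Finset.mem_erase, Finset.mem_univ, and_true, i0, i1, i2,
        Fin.le_def, ne_eq, Fin.ext_iff]
      omega
    rw [hI, Finset.image_erase f.injective, Finset.image_univ_of_surjective f.surjective]
  · intro x
    obtain ⟨A, h1, h2, h3⟩ := apc_exists x
    exact ⟨A, ⟨h1, h2, x, h3⟩, by rw [h3]; simp⟩
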